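/- Suppose the Markov kernel P with invariant probability measure π is uniformly ergodic with constants D < ∞ and ρ ∈ (0,1), i.e., |Pⁿ(x,A) − π(A)| ≤ D ρⁿ for all x, A, n ≥ 1. Let {f_θ : θ ∈ ℝ^d} be a family of measurable functions f_θ : X → ℝ^d with ∫ f_θ dπ = 0 for every θ, sup_x ‖f_θ(x)‖ ≤ B_F for all θ, and sup_x ‖f_{θ¹}(x) − f_{θ²}(x)‖ ≤ ℓ_F ‖θ¹ − θ²‖ for all θ¹, θ². Then the Poisson solutions f̂_θ(x) = Σ_{n=0}^∞ Pⁿf_θ(x) are well defined and satisfy, with B_Z = 1 + 2D/(1−ρ): sup_x ‖f̂_{θ¹}(x) − f̂_{θ²}(x)‖ ≤ B_Z ℓ_F ‖θ¹ − θ²‖ for all θ¹, θ² ∈ ℝ^d. -/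

import Mathlib

open MeasureTheory ProbabilityTheory

/-- The `n`-step kernel `Pⁿ` of a Markov kernel `P` (with `P⁰` the identity). -/
noncomputable def kernelIter {X : Type*} [MeasurableSpace X]
    (P : Kernel X X) : ℕ → Kernel X X
  | 0 => Kernel.id
  | n + 1 => P ∘ₖ kernelIter P n

/-- The Euclidean norm on `ℝ^d` (vectors as functions `Fin d → ℝ`). -/
noncomputable def euclNorm {d : ℕ} (v : Fin d → ℝ) : ℝ :=
  Real.sqrt (∑ i, v i ^ 2)

lemma aux_markov {X : Type*} [MeasurableSpace X] (P : Kernel X X) [IsMarkovKernel P] (n : ℕ) :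
    IsMarkovKernel (kernelIter P n) := by
  induction n with
  | zero => unfold kernelIter; infer_instance
  | succ n ih => unfold kernelIter; infer_instance

lemma aux_integrable {X : Type*} [MeasurableSpace X] (μ : Measure X)
    [IsProbabilityMeasure μ] (g : X → ℝ) (hg : Measurable g) (C : ℝ)
    (hC : ∀ x, |g x| ≤ C) : Integrable g μ :=
  Integrable.of_bound hg.aestronglyMeasurable C (Filter.Eventually.of_forall hC)

lemma aux_diff {X : Type*} [MeasurableSpace X] (μ ν : Measure X)
    [IsProbabilityMeasure μ] [IsProbabilityMeasure ν] (ε : ℝ)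
    (h : ∀ A, MeasurableSet A → |(μ A).toReal - (ν A).toReal| ≤ ε)
    (g : X → ℝ) (hg : Measurable g) (C : ℝ) (hC0 : 0 ≤ C) (hC : ∀ x, |g x| ≤ C) :
    |∫ x, g x ∂μ - ∫ x, g x ∂ν| ≤ 2 * C * ε := by
  have key : ∀ (m : Measure X) [IsProbabilityMeasure m],
      ∫ x, g x ∂m = (∫ t in Set.Ioc 0 (2 * C), m.real {a | t ≤ g a + C}) - C := by
    intro m _
    have hi := aux_integrable m g hg C hC
    have := (hi.add (integrable_const C)).integral_eq_integral_Ioc_meas_le (M := 2 * C)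
      (Filter.Eventually.of_forall fun x => by
        have := abs_le.1 (hC x); simp; linarith)
      (Filter.Eventually.of_forall fun x => by
        have := abs_le.1 (hC x); simp; linarith)
    simp only [Pi.add_apply] at this
    rw [← this, integral_add hi (integrable_const C)]
    simp
  have int : ∀ (m : Measure X) [IsProbabilityMeasure m],
      Integrable (fun t => m.real {a | t ≤ g a + C}) (volume.restrict (Set.Ioc 0 (2 * C))) := by
    intro m _
    have ha : Antitone (fun t => m.real {a | t ≤ g a + C}) := by
      intro s t hst
      apply measureReal_mono
      · intro a (ha : t ≤ _)
        exact hst.trans ha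
      · exact measure_ne_top _ _
    refine Integrable.of_bound ha.measurable.aestronglyMeasurable 1
      (Filter.Eventually.of_forall fun t => ?_)
    rw [Real.norm_of_nonneg measureReal_nonneg]
    exact measureReal_le_one
  rw [key μ, key ν, sub_sub_sub_cancel_right, ← integral_sub (int μ) (int ν)]
  have := norm_setIntegral_le_of_norm_le_const (μ := volume) (s := Set.Ioc 0 (2 * C)) (C := ε)
    (f := fun t => μ.real {a | t ≤ g a + C} - ν.real {a | t ≤ g a + C}) measure_Ioc_lt_top
    (fun t _ => h _ (measurableSet_le measurable_const (hg.add_const C)))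
  rw [Real.norm_eq_abs] at this
  refine this.trans (le_of_eq ?_)
  rw [Real.volume_real_Ioc_of_le (by linarith)]
  ring

lemma aux_scalar {X : Type*} [MeasurableSpace X]
    (P : Kernel X X) [IsMarkovKernel P]
    (π : Measure X) [IsProbabilityMeasure π]
    (D ρ : ℝ) (hρ : ρ ∈ Set.Ioo (0 : ℝ) 1)
    (herg : ∀ n : ℕ, 1 ≤ n → ∀ (x : X) (A : Set X), MeasurableSet A →
      |(kernelIter P n x A).toReal - (π A).toReal| ≤ D * ρ ^ n)
    (g : X → ℝ) (hg : Measurable g) (C : ℝ) (hC : ∀ x, |g x| ≤ C)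
    (h0 : ∫ x, g x ∂π = 0) (x : X) :
    Summable (fun n : ℕ => ∫ y, g y ∂(kernelIter P n x)) ∧
    ∑' n : ℕ, ∫ y, g y ∂(kernelIter P n x) ≤ (1 + 2 * D / (1 - ρ)) * C := by
  obtain ⟨hρ0, hρ1⟩ := hρ
  have hC0 : 0 ≤ C := (abs_nonneg _).trans (hC x)
  have hD : 0 ≤ D := by
    have := (abs_nonneg _).trans (herg 1 le_rfl x ∅ MeasurableSet.empty)
    rw [pow_one] at this
    exact nonneg_of_mul_nonneg_left this hρ0
  have hb : ∀ n : ℕ, ‖∫ y, g y ∂(kernelIter P (n+1) x)‖ ≤ 2 * C * D * ρ ^ n := by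
    intro n
    have := aux_markov P (n+1)
    have h := aux_diff (kernelIter P (n+1) x) π _ (herg (n+1) (by omega) x) g hg C hC0 hC
    rw [h0, sub_zero] at h
    refine h.trans ?_
    have : ρ ^ (n+1) ≤ ρ ^ n := pow_le_pow_of_le_one hρ0.le hρ1.le (by omega)
    calc 2 * C * (D * ρ ^ (n+1)) = 2 * C * D * ρ ^ (n+1) := by ring
      _ ≤ _ := by gcongr
  have hs := (hasSum_geometric_of_lt_one hρ0.le hρ1).mul_left (2 * C * D)
  have hsum : Summable (fun n : ℕ => ∫ y, g y ∂(kernelIter P n x)) :=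
    (summable_nat_add_iff 1).1 (Summable.of_norm_bounded hs.summable hb)
  refine ⟨hsum, ?_⟩
  rw [hsum.tsum_eq_zero_add]
  have h1 := (le_abs_self _).trans (tsum_of_norm_bounded hs hb)
  have h2 : ∫ y, g y ∂(kernelIter P 0 x) ≤ C := by
    have := aux_markov P 0
    have := norm_integral_le_of_norm_le_const (μ := kernelIter P 0 x) (f := g) (C := C)
      (Filter.Eventually.of_forall hC)
    simp only [probReal_univ, mul_one] at this
    exact (le_abs_self _).trans this
  calc _ ≤ C + 2 * C * D * (1 - ρ)⁻¹ := add_le_add h2 h1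
    _ = _ := by rw [div_eq_mul_inv]; ring

lemma aux_coord {d : ℕ} (v : Fin d → ℝ) (i : Fin d) : |v i| ≤ euclNorm v := by
  apply Real.abs_le_sqrt
  exact Finset.single_le_sum (f := fun i => v i ^ 2) (fun j _ => sq_nonneg _) (Finset.mem_univ i)

lemma aux_cs {d : ℕ} (v w : Fin d → ℝ) : |∑ i, v i * w i| ≤ euclNorm v * euclNorm w := by
  unfold euclNorm
  rw [← Real.sqrt_mul (Finset.sum_nonneg fun i _ => sq_nonneg _)]
  exact Real.abs_le_sqrt (Finset.sum_mul_sq_le_sq_mul_sq _ _ _)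

/-- Suppose `P` with invariant probability measure `π` is
uniformly ergodic with constants `D`, `ρ`.  Let `{f_θ}` be a family of
zero-mean (w.r.t. `π`) measurable functions `X → ℝ^d`, uniformly bounded by
`B_F` and uniformly Lipschitz in `θ` with constant `ℓ_F`.  Then the Poisson
solutions `f̂_θ(x) = Σ_{n≥0} Pⁿ f_θ(x)` are well defined and satisfy
`sup_x ‖f̂_{θ¹}(x) − f̂_{θ²}(x)‖ ≤ B_Z ℓ_F ‖θ¹ − θ²‖` with
`B_Z = 1 + 2D/(1−ρ)`. -/
theorem poisson_solutions_uniformly_lipschitz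
    {X : Type*} [MeasurableSpace X] {d : ℕ}
    (P : Kernel X X) [IsMarkovKernel P]
    (π : Measure X) [IsProbabilityMeasure π]
    (hinv : π.bind (fun x => P x) = π)
    (D ρ : ℝ) (hρ : ρ ∈ Set.Ioo (0 : ℝ) 1)
    (herg : ∀ n : ℕ, 1 ≤ n → ∀ (x : X) (A : Set X), MeasurableSet A →
      |(kernelIter P n x A).toReal - (π A).toReal| ≤ D * ρ ^ n)
    (f : (Fin d → ℝ) → X → (Fin d → ℝ))
    (hfm : ∀ (θ : Fin d → ℝ) (i : Fin d), Measurable fun x => f θ x i)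
    (B_F ℓ_F : ℝ)
    (hf0 : ∀ (θ : Fin d → ℝ) (i : Fin d), ∫ x, f θ x i ∂π = 0)
    (hfb : ∀ (θ : Fin d → ℝ) (x : X), euclNorm (f θ x) ≤ B_F)
    (hflip : ∀ (θ₁ θ₂ : Fin d → ℝ) (x : X),
      euclNorm (f θ₁ x - f θ₂ x) ≤ ℓ_F * euclNorm (θ₁ - θ₂)) :
    -- the Poisson solutions are well defined (the series converges)
    (∀ (θ : Fin d → ℝ) (x : X) (i : Fin d),
      Summable fun n : ℕ => ∫ y, f θ y i ∂(kernelIter P n x)) ∧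
    -- uniform Lipschitz bound with constant B_Z ℓ_F, B_Z = 1 + 2D/(1−ρ)
    (∀ (θ₁ θ₂ : Fin d → ℝ) (x : X),
      euclNorm (fun i =>
          (∑' n : ℕ, ∫ y, f θ₁ y i ∂(kernelIter P n x)) -
          (∑' n : ℕ, ∫ y, f θ₂ y i ∂(kernelIter P n x))) ≤
        (1 + 2 * D / (1 - ρ)) * ℓ_F * euclNorm (θ₁ - θ₂)) := by
  have hS : ∀ (θ : Fin d → ℝ) (x : X) (i : Fin d),
      Summable fun n : ℕ => ∫ y, f θ y i ∂(kernelIter P n x) := fun θ x i =>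
    (aux_scalar P π D ρ hρ herg (fun y => f θ y i) (hfm θ i) B_F
      (fun y => (aux_coord _ i).trans (hfb θ y)) (hf0 θ i) x).1
  refine ⟨hS, fun θ₁ θ₂ x => ?_⟩
  set v : Fin d → ℝ := fun i =>
          (∑' n : ℕ, ∫ y, f θ₁ y i ∂(kernelIter P n x)) -
          (∑' n : ℕ, ∫ y, f θ₂ y i ∂(kernelIter P n x)) with hv
  have hint : ∀ (m : Measure X) [IsProbabilityMeasure m] (θ : Fin d → ℝ) (i : Fin d),
      Integrable (fun y => f θ y i) m := fun m _ θ i =>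
    aux_integrable m _ (hfm θ i) B_F (fun y => (aux_coord _ i).trans (hfb θ y))
  have hgi : ∀ (m : Measure X) [IsProbabilityMeasure m],
      ∫ y, ∑ i, v i * (f θ₁ y - f θ₂ y) i ∂m
        = ∑ i, v i * (∫ y, f θ₁ y i ∂m - ∫ y, f θ₂ y i ∂m) := by
    intro m _
    simp only [Pi.sub_apply]
    refine (integral_finsetSum _ fun i _ =>
      ((hint m θ₁ i).sub (hint m θ₂ i)).const_mul (v i)).trans ?_
    refine Finset.sum_congr rfl fun i _ => ?_
    simp only [Pi.sub_apply]
    rw [integral_const_mul, integral_sub (hint m θ₁ i) (hint m θ₂ i)]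
  have hmain := (aux_scalar P π D ρ hρ herg (fun y => ∑ i, v i * (f θ₁ y - f θ₂ y) i)
    (Finset.measurable_sum _ fun i _ => ((hfm θ₁ i).sub (hfm θ₂ i)).const_mul (v i))
    (euclNorm v * (ℓ_F * euclNorm (θ₁ - θ₂)))
    (fun y => (aux_cs _ _).trans
      (mul_le_mul_of_nonneg_left (hflip θ₁ θ₂ y) (Real.sqrt_nonneg _)))
    (by rw [hgi π]; simp [hf0]) x).2
  have hts : ∑' n : ℕ, ∫ y, ∑ i, v i * (f θ₁ y - f θ₂ y) i ∂(kernelIter P n x)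
      = ∑ i, v i * v i := by
    have : ∀ n : ℕ, ∫ y, ∑ i, v i * (f θ₁ y - f θ₂ y) i ∂(kernelIter P n x)
        = ∑ i, v i * (∫ y, f θ₁ y i ∂(kernelIter P n x) - ∫ y, f θ₂ y i ∂(kernelIter P n x)) := by
      intro n
      have := aux_markov P n
      exact hgi _
    simp_rw [this]
    exact (hasSum_sum fun i _ =>
      (((hS θ₁ x i).hasSum.sub (hS θ₂ x i).hasSum).mul_left (v i))).tsum_eq
  rw [hts] at hmain
  have hsq : ∑ i, v i * v i = euclNorm v * euclNorm v := by
    unfold euclNorm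
    rw [Real.mul_self_sqrt (Finset.sum_nonneg fun i _ => sq_nonneg _)]
    exact Finset.sum_congr rfl fun i _ => (sq _).symm
  rw [hsq] at hmain
  have hv0 : 0 ≤ euclNorm v := Real.sqrt_nonneg _
  rcases hv0.eq_or_lt with h | h
  · rw [← h]
    have hD : 0 ≤ D := by
      have := (abs_nonneg _).trans (herg 1 le_rfl x ∅ MeasurableSet.empty)
      rw [pow_one] at this
      exact nonneg_of_mul_nonneg_left this hρ.1
    have h1 : 0 ≤ ℓ_F * euclNorm (θ₁ - θ₂) := (Real.sqrt_nonneg _).trans (hflip θ₁ θ₂ x)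
    have h2 : 0 < 1 - ρ := by linarith [hρ.2]
    rw [mul_assoc]
    positivity
  · refine le_of_mul_le_mul_left (hmain.trans (le_of_eq ?_)) h
    ring
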